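/- arXiv:2005.11666 — 2 statements merged into one kernel-verified Lean document; each statement's English description precedes it below -/
import Mathlib

section
/- The elliptic curve y² = (3x+1)(−x/3+1)(8x/3+1) (equivalently, induced by the rational Diophantine triple {3, −1/3, 8/3}) has torsion subgroup over ℚ isomorphic to ℤ/2ℤ × ℤ/4ℤ and Mordell–Weil rank 0. -/
/-- The Weierstrass model `y² = (x+ab)(x+ac)(x+bc)` of the elliptic curve
`y² = (3x+1)(−x/3+1)(8x/3+1)` induced by the rational Diophantine triple
`{3, −1/3, 8/3}` (via `(x, y) ↦ (abc·x, abc·y)`), where `a = 3`, `b = −1/3`,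
`c = 8/3`, so `ab+ac+bc = 55/9`, `abc(a+b+c) = -128/9`, `(abc)² = 64`. -/
def curve10 : WeierstrassCurve.Affine ℚ :=
  { a₁ := 0, a₂ := 3 * (-1/3) + 3 * (8/3) + (-1/3) * (8/3), a₃ := 0,
    a₄ := 3 * (-1/3) * (8/3) * (3 + (-1/3) + (8/3)),
    a₆ := (3 * (-1/3) * (8/3)) ^ 2 }

lemma Hsq {A B C : ℤ} (h : IsCoprime A B) (hA : 0 < A) (hB : 0 < B) (hC : A * B = C ^ 2) :
    ∃ m n : ℤ, A = m ^ 2 ∧ B = n ^ 2 ∧ C = m * n ∧ IsCoprime m n := by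
  obtain ⟨m, hm⟩ := Int.sq_of_isCoprime h hC
  obtain ⟨n, hn⟩ := Int.sq_of_isCoprime h.symm (by rw [mul_comm]; exact hC)
  have hm : A = m ^ 2 := by
    rcases hm with h | h
    · exact h
    · nlinarith [sq_nonneg m]
  have hn : B = n ^ 2 := by
    rcases hn with h | h
    · exact h
    · nlinarith [sq_nonneg n]
  have hc : IsCoprime m n := by
    rw [hm, hn] at h
    exact (IsCoprime.pow_iff two_pos two_pos).1 h
  have : C ^ 2 = (m * n) ^ 2 := by rw [← hC, hm, hn]; ring
  rcases sq_eq_sq_iff_eq_or_eq_neg.1 this with h' | h'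
  · exact ⟨m, n, hm, hn, h', hc⟩
  · exact ⟨m, -n, hm, by rw [hn]; ring, by rw [h']; ring, hc.neg_right⟩

lemma three_dvd_sq {a : ℤ} (h : (3:ℤ) ∣ a ^ 2) : (3:ℤ) ∣ a :=
  Int.prime_three.dvd_of_dvd_pow h

lemma sq_mod3 {a : ℤ} (h : ¬ (3:ℤ) ∣ a) : a ^ 2 % 3 = 1 := by
  have : a % 3 = 1 ∨ a % 3 = 2 := by omega
  rcases this with h | h <;> simp [pow_two, Int.mul_emod, h]

lemma sq_mod8 {a : ℤ} (h : a % 2 = 1) : a ^ 2 % 8 = 1 := by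
  have : a % 8 = 1 ∨ a % 8 = 3 ∨ a % 8 = 5 ∨ a % 8 = 7 := by omega
  rcases this with h | h | h | h <;> simp [pow_two, Int.mul_emod, h]

lemma sq_mod4 {a : ℤ} (h : a % 2 = 0) : a ^ 2 % 4 = 0 := by
  obtain ⟨b, rfl⟩ : (2:ℤ) ∣ a := by omega
  have : (2 * b) ^ 2 = 4 * b ^ 2 := by ring
  omega

lemma not_both_dvd {a b : ℤ} (h : IsCoprime a b) (d : ℤ) (hd : ¬ IsUnit d) (ha : d ∣ a) (hb : d ∣ b) : False :=
  hd (h.isUnit_of_dvd' ha hb)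

lemma not_both_even {a b : ℤ} (h : IsCoprime a b) (ha : a % 2 = 0) (hb : b % 2 = 0) : False :=
  not_both_dvd h 2 (by decide) (by omega) (by omega)

lemma not_both_three {a b : ℤ} (h : IsCoprime a b) (ha : (3:ℤ) ∣ a) (hb : (3:ℤ) ∣ b) : False :=
  not_both_dvd h 3 (by decide) ha hb

/-- four number lemma -/
lemma four {m n a b : ℤ} (hm : m ≠ 0) (h : m * n = a * b) :
    ∃ x y z w : ℤ, m = x * y ∧ n = z * w ∧ a = x * z ∧ b = y * w := by
  obtain ⟨x, y, ⟨z, hz⟩, ⟨w, hw⟩, rfl⟩ := exists_dvd_and_dvd_of_dvd_mul (Dvd.intro n h)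
  refine ⟨x, y, z, w, rfl, ?_, hz, hw⟩
  apply mul_left_cancel₀ hm
  rw [h, hz, hw]; ring

lemma core_aux {m n a b : ℤ} (hmn : IsCoprime m n) (hab : IsCoprime (9 * a) b) (h : m * n = a * b)
    (h0 : m * n ≠ 0) (he : m ^ 2 - n ^ 2 = (9 * a) ^ 2 - b ^ 2) :
    ∃ k x y z w : ℤ, (k = 1 ∨ k = 10) ∧ x ^ 2 + w ^ 2 = k * z ^ 2 ∧ 81 * x ^ 2 + w ^ 2 = k * y ^ 2 ∧
      IsCoprime x w ∧ IsCoprime y z ∧ m * n = x * y * z * w ∧ ¬ (3:ℤ) ∣ w := by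
  obtain ⟨x, y, z, w, rfl, rfl, rfl, rfl⟩ := four (left_ne_zero_of_mul h0) h
  have hxw : IsCoprime x w := hmn.of_mul_left_left.of_mul_right_right
  have hyz : IsCoprime y z := hmn.of_mul_left_right.of_mul_right_left
  have h3w : ¬ (3:ℤ) ∣ w := fun hw =>
    not_both_three hab ⟨3 * (x * z), by ring⟩ (hw.mul_left _)
  have hz0 : z ≠ 0 := by rintro rfl; simp at h0
  have hx0 : x ≠ 0 := by rintro rfl; simp at h0
  have key : y ^ 2 * (x ^ 2 + w ^ 2) = z ^ 2 * (81 * x ^ 2 + w ^ 2) := by linear_combination he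
  obtain ⟨k, hk⟩ : z ^ 2 ∣ x ^ 2 + w ^ 2 :=
    (hyz.symm.pow (m := 2) (n := 2)).dvd_of_dvd_mul_left ⟨_, key⟩
  have hk2 : 81 * x ^ 2 + w ^ 2 = k * y ^ 2 := by
    apply mul_left_cancel₀ (pow_ne_zero 2 hz0)
    rw [← key, hk]; ring
  have hk1 : x ^ 2 + w ^ 2 = k * z ^ 2 := by rw [hk]; ring
  have hkpos : 0 < k := by
    by_contra hneg
    have : 0 < x ^ 2 := by positivity
    nlinarith [sq_nonneg w, sq_nonneg z]
  have d1 : k ∣ 80 * x ^ 2 := ⟨y ^ 2 - z ^ 2, by linear_combination hk2 - hk1⟩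
  have d2 : k ∣ 80 * w ^ 2 := ⟨81 * z ^ 2 - y ^ 2, by linear_combination 81 * hk1 - hk2⟩
  have d : k ∣ 80 := by
    obtain ⟨u, v, huv⟩ := hxw.pow (m := 2) (n := 2)
    have : (80:ℤ) = u * (80 * x ^ 2) + v * (80 * w ^ 2) := by linear_combination -80 * huv
    rw [this]
    exact dvd_add (d1.mul_left _) (d2.mul_left _)
  have h4 : ¬ (4:ℤ) ∣ k := by
    rintro ⟨j, rfl⟩
    have e : x ^ 2 + w ^ 2 = 4 * (j * z ^ 2) := by rw [hk1]; ring
    rcases Int.emod_two_eq_zero_or_one x with a | a <;> rcases Int.emod_two_eq_zero_or_one w with b | b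
    · exact not_both_even hxw a b
    · have := sq_mod4 a; have := sq_mod8 b; omega
    · have := sq_mod8 a; have := sq_mod4 b; omega
    · have := sq_mod8 a; have := sq_mod8 b; omega
  have hkm : k % 3 = 1 := by
    have hw := sq_mod3 h3w
    have e : (k * y ^ 2) % 3 = 1 := by omega
    by_cases h3y : (3:ℤ) ∣ y
    · have : (3:ℤ) ∣ k * y ^ 2 := (dvd_pow h3y two_ne_zero).mul_left _
      omega
    · have := sq_mod3 h3y
      rw [Int.mul_emod, this] at e
      omega
  refine ⟨k, x, y, z, w, ?_, hk1, hk2, hxw, hyz, by ring, h3w⟩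
  have hle : k ≤ 80 := Int.le_of_dvd (by norm_num) d
  clear hk hk1 hk2 d1 d2 key he h h0
  interval_cases k <;> omega

lemma core {m n a b : ℤ} (hmn : IsCoprime m n) (hab : IsCoprime a b) (h : 9 * (m * n) = a * b)
    (h0 : m * n ≠ 0) (he : m ^ 2 - n ^ 2 = a ^ 2 - b ^ 2) :
    ∃ k x y z w : ℤ, (k = 1 ∨ k = 10) ∧ x ^ 2 + w ^ 2 = k * z ^ 2 ∧ 81 * x ^ 2 + w ^ 2 = k * y ^ 2 ∧
      IsCoprime x w ∧ IsCoprime y z ∧ m * n = x * y * z * w ∧ ¬ (3:ℤ) ∣ w := by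
  have h9 : (9:ℤ) ∣ a * b := ⟨_, h.symm⟩
  by_cases h3 : (3:ℤ) ∣ a
  · have : IsCoprime (3:ℤ) b := (Int.prime_three.coprime_iff_not_dvd).2 fun hb => not_both_three hab h3 hb
    have : IsCoprime (9:ℤ) b := by
      have := this.pow_left (m := 2); norm_num at this; exact this
    obtain ⟨c, rfl⟩ := this.dvd_of_dvd_mul_right h9
    exact core_aux hmn hab (by linarith) h0 he
  · have : IsCoprime (3:ℤ) a := (Int.prime_three.coprime_iff_not_dvd).2 h3
    have : IsCoprime (9:ℤ) a := by
      have := this.pow_left (m := 2); norm_num at this; exact this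
    obtain ⟨c, rfl⟩ := this.dvd_of_dvd_mul_left h9
    obtain ⟨k, x, y, z, w, H⟩ := core_aux hmn.symm hab.symm (by linarith) (by rwa [mul_comm]) (by linarith)
    exact ⟨k, x, y, z, w, by rwa [mul_comm m n]⟩

lemma Hdiff {A B P D : ℤ} (hA : 0 < A) (hB : 0 < B) (hP : A - B = P) (hD : A * B = D ^ 2)
    (hc : IsCoprime P D) :
    ∃ m n : ℤ, A = m ^ 2 ∧ B = n ^ 2 ∧ D = m * n ∧ IsCoprime m n := by
  refine Hsq ?_ hA hB hD
  have h1 : IsCoprime P (A * B) := by rw [hD]; exact hc.pow_right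
  obtain ⟨u, v, h⟩ := h1.of_mul_right_left
  exact ⟨u + v, -u, by rw [← h, ← hP]; ring⟩

lemma pos_of_sq {r p C : ℤ} (hr : 0 ≤ r) (hC : C ≠ 0) (h : p ^ 2 + C ^ 2 = r ^ 2) :
    0 < r + p ∧ 0 < r - p := by
  have : 0 < C ^ 2 := by positivity
  have := abs_lt_of_sq_lt_sq (show p ^ 2 < r ^ 2 by linarith) hr
  rw [abs_lt] at this
  constructor <;> linarith

lemma par_even {r p D : ℤ} (hp : p % 2 = 1) (hD : D ≠ 0) (hc : IsCoprime p D)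
    (h : p ^ 2 + (2 * D) ^ 2 = r ^ 2) :
    ∃ m n : ℤ, m ^ 2 - n ^ 2 = p ∧ D = m * n ∧ IsCoprime m n := by
  wlog hr : 0 ≤ r generalizing r
  · exact this (r := -r) (by rw [h]; ring) (by omega)
  obtain ⟨h1, h2⟩ := pos_of_sq hr (mul_ne_zero two_ne_zero hD) h
  have hr2 : r % 2 = 1 := by
    by_contra hh
    have := sq_mod4 (a := r) (by omega)
    have := sq_mod8 hp
    have : (2 * D) ^ 2 = 4 * D ^ 2 := by ring
    omega
  obtain ⟨A, hA⟩ : (2:ℤ) ∣ r + p := by omega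
  obtain ⟨B, hB⟩ : (2:ℤ) ∣ r - p := by omega
  obtain ⟨m, n, e1, e2, e3, e4⟩ := Hdiff (A := A) (B := B) (P := p) (D := D) (by omega) (by omega)
    (by omega) (by
      have : (2 * A) * (2 * B) = 4 * D ^ 2 := by rw [← hA, ← hB]; linear_combination -h
      linarith) hc
  exact ⟨m, n, by rw [← e1, ← e2]; omega, e3, e4⟩

lemma par_odd {r p C : ℤ} (hC : C % 2 = 1) (hc : IsCoprime p C)
    (h : p ^ 2 + C ^ 2 = r ^ 2) :
    ∃ m n : ℤ, m ^ 2 - n ^ 2 = 2 * p ∧ C = m * n ∧ IsCoprime m n := by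
  wlog hr : 0 ≤ r generalizing r
  · exact this (r := -r) (by rw [h]; ring) (by omega)
  obtain ⟨h1, h2⟩ := pos_of_sq hr (by rintro rfl; simp at hC) h
  have h2C : IsCoprime (2:ℤ) C := by
    refine ⟨-(C / 2), 1, ?_⟩
    omega
  obtain ⟨m, n, e1, e2, e3, e4⟩ := Hdiff (A := r + p) (B := r - p) (P := 2 * p) (D := C) h1 h2
    (by ring) (by linear_combination -h) (h2C.mul_left hc)
  exact ⟨m, n, by rw [← e1, ← e2]; ring, e3, e4⟩

lemma odd_of_mul {a b : ℤ} (h : (a * b) % 2 = 1) : a % 2 = 1 ∧ b % 2 = 1 := by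
  rw [← Int.odd_iff] at *
  rw [← Int.odd_iff]
  exact Int.odd_mul.1 h

lemma K10_aux {x U V w : ℤ} (hx : x ≠ 0) (h : U * V = x ^ 2) (hc : IsCoprime U V) (hU : 0 < 2 * U + V)
    (hV : V % 2 = 1) (h3w : ¬ (3:ℤ) ∣ w) (e : x ^ 2 + w ^ 2 = 10 * (2 * U - V) ^ 2) : False := by
  have hpos : 0 < U * V := by rw [h]; positivity
  have hU' : 0 < U := by
    by_contra hh
    have : V < 0 := by
      by_contra h'
      nlinarith
    linarith
  have hV' : 0 < V := pos_of_mul_pos_right hpos hU'.le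
  obtain ⟨A, B, rfl, rfl, rfl, hAB⟩ := Hsq hc hU' hV' h
  have hB : B % 2 = 1 := by
    rw [pow_two] at hV; exact (odd_of_mul hV).1
  have key : (8 * A ^ 2 - 5 * B ^ 2) * (5 * A ^ 2 - 2 * B ^ 2) = w ^ 2 := by linear_combination -e
  have c3 : IsCoprime (3:ℤ) w := (Int.prime_three.coprime_iff_not_dvd).2 h3w
  have c9 : IsCoprime (9:ℤ) (8 * A ^ 2 - 5 * B ^ 2) := by
    have := (c3.pow (m := 2) (n := 2))
    rw [← key] at this
    norm_num at this
    exact this.of_mul_right_left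
  have cc : IsCoprime (8 * A ^ 2 - 5 * B ^ 2) (5 * A ^ 2 - 2 * B ^ 2) := by
    obtain ⟨u, v, huv⟩ := hc
    obtain ⟨s, t, hst⟩ := c9
    refine ⟨t + s * (u * (-2) + v * (-5)), s * (u * 5 + v * 8), ?_⟩
    linear_combination hst + 9 * s * huv
  obtain ⟨c, hcc⟩ := Int.sq_of_isCoprime cc key
  have hb8 := sq_mod8 hB
  have hc1 : c % 2 = 1 := by
    by_contra hh
    have := sq_mod4 (a := c) (by omega)
    omega
  have := sq_mod8 hc1
  omega

lemma K10 {x y z w : ℤ} (hx : x % 2 = 1) (hy : y % 2 = 1) (hz : z % 2 = 1)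
    (h1 : x ^ 2 + w ^ 2 = 10 * z ^ 2) (h2 : 81 * x ^ 2 + w ^ 2 = 10 * y ^ 2)
    (hyz : IsCoprime y z) (h3w : ¬ (3:ℤ) ∣ w) : False := by
  wlog hy0 : 0 < y generalizing y
  · exact this (y := -y) (by omega) (by rw [h2]; ring) hyz.neg_left (by omega)
  wlog hp : (y + z) % 4 = 0 generalizing z
  · exact this (z := -z) (by omega) (by rw [h1]; ring) hyz.neg_right (by omega)
  obtain ⟨U, hU⟩ : (4:ℤ) ∣ y + z := by omega
  obtain ⟨V, hV⟩ : (2:ℤ) ∣ y - z := by omega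
  obtain rfl : y = 2 * U + V := by omega
  obtain rfl : z = 2 * U - V := by omega
  have hc : IsCoprime U V := by
    obtain ⟨u, v, huv⟩ := hyz
    exact ⟨2 * u + 2 * v, u - v, by linear_combination huv⟩
  exact K10_aux (x := x) (by rintro rfl; simp at hx) (by linarith) hc hy0 (by omega) h3w h1

lemma nine_cop {p q : ℤ} (h : IsCoprime p q) (h3 : ¬ (3:ℤ) ∣ p) : IsCoprime p (9 * q) := by
  have : IsCoprime (3:ℤ) p := (Int.prime_three.coprime_iff_not_dvd).2 h3
  have : IsCoprime (9:ℤ) p := by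
    have := this.pow_left (m := 2); norm_num at this; exact this
  exact this.symm.mul_right h

lemma L2 {p q r s : ℤ} (hc : IsCoprime p q) (hq : q % 2 = 1) (h3 : ¬ (3:ℤ) ∣ p)
    (hr : p ^ 2 + q ^ 2 = r ^ 2) (hs : p ^ 2 + 81 * q ^ 2 = s ^ 2) : False := by
  obtain ⟨m, n, e1, rfl, c1⟩ := par_odd hq hc hr
  obtain ⟨a, b, f1, f2, c2⟩ := par_odd (p := p) (C := 9 * (m * n)) (r := s) (by omega) (nine_cop hc h3)
    (by linear_combination hs)
  obtain ⟨k, x, y, z, w, hk, g1, g2, hxw, hyz, hm, h3w⟩ :=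
    core c1 c2 f2 (by intro h; rw [h] at hq; simp at hq) (by linarith)
  rw [hm] at hq
  obtain ⟨hq, hw⟩ := odd_of_mul hq
  obtain ⟨hq, hz⟩ := odd_of_mul hq
  obtain ⟨hx, hy⟩ := odd_of_mul hq
  rcases hk with rfl | rfl
  · have := sq_mod8 hw
    have := sq_mod8 hz
    have := sq_mod8 hx
    omega
  · exact K10 hx hy hz g1 g2 hyz h3w

lemma L3 (N : ℕ) : ∀ {p q r s : ℤ}, q.natAbs = N → IsCoprime p q → p % 2 = 1 → q % 2 = 0 → q ≠ 0 →
    ¬ (3:ℤ) ∣ p → p ^ 2 + q ^ 2 = r ^ 2 → p ^ 2 + 81 * q ^ 2 = s ^ 2 → False := by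
  induction N using Nat.strong_induction_on with
  | _ N ih =>
  intro p q r s hN hc hp hq hq0 h3 hr hs
  obtain ⟨D, rfl⟩ : (2:ℤ) ∣ q := by omega
  have hD : D ≠ 0 := by omega
  have hc' : IsCoprime p D := hc.of_mul_right_right
  obtain ⟨m, n, e1, rfl, c1⟩ := par_even hp hD hc' hr
  obtain ⟨a, b, f1, f2, c2⟩ := par_even (p := p) (D := 9 * (m * n)) (r := s) hp (by omega)
    (nine_cop hc' h3) (by linear_combination hs)
  obtain ⟨k, x, y, z, w, hk, g1, g2, hxw, hyz, hm, h3w⟩ := core c1 c2 f2 hD (by linarith)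
  rcases hk with rfl | rfl
  · have hx0 : x ≠ 0 := by rintro rfl; simp at hm; simp [hm] at hD
    rcases Int.emod_two_eq_zero_or_one x with hx | hx
    · refine ih x.natAbs ?_ (p := w) (q := x) (r := z) (s := y) rfl hxw.symm ?_ hx hx0 h3w
        (by linarith) (by linarith)
      · rw [← hN]
        have hd : x ∣ m * n := ⟨y * z * w, by rw [hm]; ring⟩
        have := Int.natAbs_le_of_dvd_ne_zero hd hD
        omega
      · by_contra hw
        exact not_both_even hxw hx (by omega)
    · exact L2 (p := w) (q := x) (r := z) (s := y) hxw.symm hx h3w (by linarith) (by linarith)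
  · have hx : x % 2 = 1 := by
      by_contra hx
      have h1 := sq_mod4 (a := x) (by omega)
      rcases Int.emod_two_eq_zero_or_one w with hw | hw
      · exact not_both_even hxw (by omega) hw
      · have := sq_mod8 hw; omega
    have hw : w % 2 = 1 := by
      by_contra hw
      have := sq_mod4 (a := w) (by omega)
      have := sq_mod8 hx
      omega
    have hx8 := sq_mod8 hx
    have hw8 := sq_mod8 hw
    have hz : z % 2 = 1 := by
      by_contra hz
      have := sq_mod4 (a := z) (by omega)
      omega
    have hy : y % 2 = 1 := by
      by_contra hz
      have := sq_mod4 (a := y) (by omega)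
      omega
    exact K10 hx hy hz g1 g2 hyz h3w

lemma L1_aux {m n a b : ℤ} (hmn : IsCoprime m n) (h : m * n = a * b)
    (h3 : ¬ (3:ℤ) ∣ m * n) (h2 : (m * n) % 2 = 0) (h0 : m * n ≠ 0)
    (he : m ^ 2 - n ^ 2 = 3 * ((3 * a) ^ 2 - b ^ 2)) : False := by
  obtain ⟨x, y, z, w, rfl, rfl, rfl, rfl⟩ := four (left_ne_zero_of_mul h0) h
  have hxw : IsCoprime x w := hmn.of_mul_left_left.of_mul_right_right
  have hyz : IsCoprime y z := hmn.of_mul_left_right.of_mul_right_left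
  have h3x : ¬ (3:ℤ) ∣ x := fun hw => h3 ((hw.mul_right _).mul_right _)
  have h3z : ¬ (3:ℤ) ∣ z := fun hw => h3 ((hw.mul_right _).mul_left _)
  have hz0 : z ≠ 0 := by rintro rfl; simp at h0
  have hx0 : x ≠ 0 := by rintro rfl; simp at h0
  have key : y ^ 2 * (x ^ 2 + 3 * w ^ 2) = z ^ 2 * (27 * x ^ 2 + w ^ 2) := by linear_combination he
  obtain ⟨k, hk⟩ : z ^ 2 ∣ x ^ 2 + 3 * w ^ 2 :=
    (hyz.symm.pow (m := 2) (n := 2)).dvd_of_dvd_mul_left ⟨_, key⟩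
  have hk2 : 27 * x ^ 2 + w ^ 2 = k * y ^ 2 := by
    apply mul_left_cancel₀ (pow_ne_zero 2 hz0)
    rw [← key, hk]; ring
  have hk1 : x ^ 2 + 3 * w ^ 2 = k * z ^ 2 := by rw [hk]; ring
  have hkpos : 0 < k := by
    by_contra hneg
    have : 0 < x ^ 2 := by positivity
    nlinarith [sq_nonneg w, sq_nonneg z]
  have d1 : k ∣ 80 * x ^ 2 := ⟨3 * y ^ 2 - z ^ 2, by linear_combination 3 * hk2 - hk1⟩
  have d2 : k ∣ 80 * w ^ 2 := ⟨27 * z ^ 2 - y ^ 2, by linear_combination 27 * hk1 - hk2⟩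
  have d : k ∣ 80 := by
    obtain ⟨u, v, huv⟩ := hxw.pow (m := 2) (n := 2)
    have : (80:ℤ) = u * (80 * x ^ 2) + v * (80 * w ^ 2) := by linear_combination -80 * huv
    rw [this]
    exact dvd_add (d1.mul_left _) (d2.mul_left _)
  have hkm : k % 3 = 1 := by
    have hx := sq_mod3 h3x
    have e : (k * z ^ 2) % 3 = 1 := by omega
    rw [Int.mul_emod, sq_mod3 h3z] at e
    omega
  have h5 : ¬ (5:ℤ) ∣ k := by
    rintro ⟨j, rfl⟩
    have e : x ^ 2 + 3 * w ^ 2 = 5 * (j * z ^ 2) := by rw [hk1]; ring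
    have e' : (x ^ 2 + 3 * w ^ 2) % 5 = 0 := by omega
    have hx : x % 5 = 0 ∨ x % 5 = 1 ∨ x % 5 = 2 ∨ x % 5 = 3 ∨ x % 5 = 4 := by omega
    have hw : w % 5 = 0 ∨ w % 5 = 1 ∨ w % 5 = 2 ∨ w % 5 = 3 ∨ w % 5 = 4 := by omega
    by_cases hb : x % 5 = 0 ∧ w % 5 = 0
    · exact not_both_dvd hxw 5 (by decide) (by omega) (by omega)
    · rcases hx with hx | hx | hx | hx | hx <;> rcases hw with hw | hw | hw | hw | hw <;>
        simp [pow_two, Int.add_emod, Int.mul_emod, hx, hw] at e' hb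
  have hle : k ≤ 80 := Int.le_of_dvd (by norm_num) d
  have hk4 : k = 1 ∨ k = 4 ∨ k = 16 := by
    clear hk hk1 hk2 d1 d2 key he h h0 h2
    interval_cases k <;> omega
  rcases Int.emod_two_eq_zero_or_one x with hx | hx <;> rcases Int.emod_two_eq_zero_or_one w with hw | hw
  · exact not_both_even hxw hx hw
  · have := sq_mod4 hx
    have := sq_mod8 hw
    rcases Int.emod_two_eq_zero_or_one z with hz | hz
    · have := sq_mod4 hz
      rcases hk4 with rfl | rfl | rfl <;> omega
    · have := sq_mod8 hz
      rcases hk4 with rfl | rfl | rfl <;> omega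
  · have := sq_mod4 hw
    have := sq_mod8 hx
    rcases Int.emod_two_eq_zero_or_one y with hz | hz
    · have := sq_mod4 hz
      rcases hk4 with rfl | rfl | rfl <;> omega
    · have := sq_mod8 hz
      rcases hk4 with rfl | rfl | rfl <;> omega
  · have h1 := sq_mod8 hw
    have h1' := sq_mod8 hx
    have hz : z % 2 = 1 := by
      by_contra hz
      have := sq_mod4 (a := z) (by omega)
      have hyo : y % 2 = 1 := by
        by_contra hh
        exact not_both_even hyz (by omega) (by omega)
      have := sq_mod8 hyo
      rcases hk4 with rfl | rfl | rfl <;> omega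
    have hz8 := sq_mod8 hz
    have hy : y % 2 = 1 := by
      by_contra hy
      have := sq_mod4 (a := y) (by omega)
      rcases hk4 with rfl | rfl | rfl <;> omega
    have : Odd (x * y * (z * w)) := by
      rw [Int.odd_mul, Int.odd_mul, Int.odd_mul]
      simp only [Int.odd_iff]; tauto
    rw [Int.odd_iff] at this
    omega

lemma L1_even {p q r s : ℤ} (hc : IsCoprime p q) (hq : q % 2 = 0) (hp : p % 2 = 1) (h3 : ¬ (3:ℤ) ∣ p)
    (h3q : ¬ (3:ℤ) ∣ q)
    (hr : 9 * p ^ 2 + q ^ 2 = r ^ 2) (hs : p ^ 2 + 9 * q ^ 2 = s ^ 2) : False := by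
  obtain ⟨D, rfl⟩ : (2:ℤ) ∣ q := by omega
  have hD : D ≠ 0 := by rintro rfl; simp at h3q
  have h3D : ¬ (3:ℤ) ∣ D := fun h => h3q (h.mul_left _)
  have hc' : IsCoprime p D := hc.of_mul_right_right
  have t1 : IsCoprime (3:ℤ) D := (Int.prime_three.coprime_iff_not_dvd).2 h3D
  have t2 : IsCoprime (3:ℤ) p := (Int.prime_three.coprime_iff_not_dvd).2 h3
  obtain ⟨m, n, e1, rfl, c1⟩ := par_even (p := 3 * p) (D := D) (r := r) (by omega) hD (t1.mul_left hc')
    (by linear_combination hr)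
  obtain ⟨a, b, f1, f2, c2⟩ := par_even (p := p) (D := 3 * (m * n)) (r := s) hp (by omega)
    (t2.symm.mul_right hc') (by linear_combination hs)
  have h2 : (m * n) % 2 = 0 := by
    by_contra hh
    obtain ⟨hm, hn⟩ := odd_of_mul (a := m) (b := n) (by omega)
    have := sq_mod8 hm
    have := sq_mod8 hn
    omega
  rcases Int.prime_three.dvd_or_dvd (Dvd.intro _ f2) with ⟨c, rfl⟩ | ⟨c, rfl⟩
  · exact L1_aux (a := c) (b := b) c1 (by linarith) h3D h2 hD (by linarith)
  · exact L1_aux (a := c) (b := a) c1.symm (by linarith) (by rwa [mul_comm]) (by rwa [mul_comm])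
      (by rwa [mul_comm]) (by linarith)

lemma not_both_odd {p q r : ℤ} (h : p ^ 2 + q ^ 2 = r ^ 2) (hp : p % 2 = 1) (hq : q % 2 = 1) : False := by
  have := sq_mod8 hp
  have := sq_mod8 hq
  rcases Int.emod_two_eq_zero_or_one r with hz | hz
  · have := sq_mod4 hz; omega
  · have := sq_mod8 hz; omega

lemma L1 {p q r s : ℤ} (hc : IsCoprime p q) (h3 : ¬ (3:ℤ) ∣ p) (h3q : ¬ (3:ℤ) ∣ q)
    (hr : 9 * p ^ 2 + q ^ 2 = r ^ 2) (hs : p ^ 2 + 9 * q ^ 2 = s ^ 2) : False := by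
  rcases Int.emod_two_eq_zero_or_one p with hp | hp <;> rcases Int.emod_two_eq_zero_or_one q with hq | hq
  · exact not_both_even hc hp hq
  · exact L1_even (r := s) (s := r) hc.symm hp hq h3q h3 (by linarith) (by rw [add_comm]; exact hr)
  · exact L1_even hc hq hp h3 h3q hr hs
  · exact not_both_odd (p := 3 * p) (q := q) (r := r) (by linarith) (by omega) hq

lemma L23 {p q r s : ℤ} (hc : IsCoprime p q) (h3 : ¬ (3:ℤ) ∣ p) (hq0 : q ≠ 0)
    (hr : p ^ 2 + q ^ 2 = r ^ 2) (hs : p ^ 2 + 81 * q ^ 2 = s ^ 2) : False := by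
  rcases Int.emod_two_eq_zero_or_one q with hq | hq
  · refine L3 _ rfl hc ?_ hq hq0 h3 hr hs
    by_contra hp
    exact not_both_even hc (by omega) hq
  · exact L2 hc hq h3 hr hs

lemma concordant {p q r s : ℤ} (hc : IsCoprime p q) (hp0 : p ≠ 0) (hq0 : q ≠ 0)
    (hr : p ^ 2 + q ^ 2 = r ^ 2) (hs : p ^ 2 + 81 * q ^ 2 = s ^ 2) : False := by
  by_cases h3 : (3:ℤ) ∣ p
  · have h3q : ¬ (3:ℤ) ∣ q := fun h => not_both_three hc h3 h
    obtain ⟨p, rfl⟩ := h3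
    obtain ⟨s, rfl⟩ : (3:ℤ) ∣ s := three_dvd_sq ⟨3 * p ^ 2 + 27 * q ^ 2, by rw [← hs]; ring⟩
    have hc' : IsCoprime p q := hc.of_mul_left_right
    by_cases h3p : (3:ℤ) ∣ p
    · obtain ⟨p, rfl⟩ := h3p
      obtain ⟨s, rfl⟩ : (3:ℤ) ∣ s := three_dvd_sq ⟨3 * p ^ 2 + 3 * q ^ 2, by linarith⟩
      exact L23 (p := q) (q := p) (r := s) (s := r) hc'.of_mul_left_right.symm h3q (by omega)
        (by linarith) (by linarith)
    · exact L1 (r := r) (s := s) hc' h3p h3q (by linarith) (by linarith)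
  · exact L23 hc h3 hq0 hr hs

lemma concordant_rat {a b c : ℚ} (h1 : a ^ 2 + 1 = b ^ 2) (h2 : a ^ 2 + 81 = c ^ 2) : a = 0 := by
  by_contra ha
  have hq : (a.den : ℚ) ≠ 0 := by exact_mod_cast a.den_ne_zero
  have hpq : a * a.den = a.num := Rat.mul_den_eq_num a
  obtain ⟨r, hr⟩ : IsSquare (a.num ^ 2 + (a.den : ℤ) ^ 2) := by
    rw [← Rat.isSquare_intCast_iff]
    refine ⟨b * a.den, ?_⟩
    push_cast
    rw [← hpq]
    linear_combination (a.den : ℚ) ^ 2 * h1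
  obtain ⟨s, hs⟩ : IsSquare (a.num ^ 2 + 81 * (a.den : ℤ) ^ 2) := by
    rw [← Rat.isSquare_intCast_iff]
    refine ⟨c * a.den, ?_⟩
    push_cast
    rw [← hpq]
    linear_combination (a.den : ℚ) ^ 2 * h2
  have hc : IsCoprime a.num (a.den : ℤ) := by
    rw [Int.isCoprime_iff_gcd_eq_one]
    exact a.reduced
  exact concordant hc (by simpa using ha) (by exact_mod_cast a.den_ne_zero)
    (by rw [hr]; ring) (by rw [hs]; ring)

lemma curve_points {u v : ℚ} (h : v ^ 2 = u * (u + 1) * (u + 81)) :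
    v = 0 ∨ u = 9 ∨ u = -9 := by
  by_cases hv : v = 0
  · exact Or.inl hv
  right
  have := concordant_rat (a := (u ^ 2 - 81) / (2 * v)) (b := (u ^ 2 + 2 * u + 81) / (2 * v))
    (c := (u ^ 2 + 162 * u + 81) / (2 * v)) (by field_simp; linear_combination 4 * h)
    (by field_simp; linear_combination 324 * h)
  have h0 : (u - 9) * (u + 9) = 0 := by
    rw [div_eq_zero_iff] at this
    rcases this with h | h
    · linear_combination h
    · exact absurd h (by simpa using hv)
  rcases mul_eq_zero.1 h0 with h | h
  · left; linarith
  · right; linarith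

open WeierstrassCurve.Affine in
lemma ns_1 : curve10.Nonsingular 1 0 := by
  rw [nonsingular_iff, equation_iff]; norm_num [curve10]

open WeierstrassCurve.Affine in
lemma ns_8 : curve10.Nonsingular (-8) 0 := by
  rw [nonsingular_iff, equation_iff]; norm_num [curve10]

open WeierstrassCurve.Affine in
lemma ns_89 : curve10.Nonsingular (8/9) 0 := by
  rw [nonsingular_iff, equation_iff]; norm_num [curve10]

open WeierstrassCurve.Affine in
lemma ns_2 : curve10.Nonsingular 2 (10/3) := by
  rw [nonsingular_iff, equation_iff]; norm_num [curve10]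

open WeierstrassCurve.Affine in
lemma ns_2' : curve10.Nonsingular 2 (-10/3) := by
  rw [nonsingular_iff, equation_iff]; norm_num [curve10]

open WeierstrassCurve.Affine in
lemma ns_0 : curve10.Nonsingular 0 (8/3) := by
  rw [nonsingular_iff, equation_iff]; norm_num [curve10]

open WeierstrassCurve.Affine in
lemma ns_0' : curve10.Nonsingular 0 (-8/3) := by
  rw [nonsingular_iff, equation_iff]; norm_num [curve10]

open WeierstrassCurve.Affine in
lemma add_chord {x₁ y₁ x₂ y₂ x₃ y₃ : ℚ} {h₁ : curve10.Nonsingular x₁ y₁}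
    {h₂ : curve10.Nonsingular x₂ y₂} {h₃ : curve10.Nonsingular x₃ y₃} (hx : x₁ ≠ x₂)
    (e : x₃ = ((y₁ - y₂) / (x₁ - x₂)) ^ 2 - 55 / 9 - x₁ - x₂)
    (f : y₃ = -((y₁ - y₂) / (x₁ - x₂) * (x₃ - x₁) + y₁)) :
    Point.some x₁ y₁ h₁ + Point.some x₂ y₂ h₂ = Point.some x₃ y₃ h₃ := by
  have hX : curve10.addX x₁ x₂ (curve10.slope x₁ x₂ y₁ y₂) = x₃ := by
    rw [slope_of_X_ne hx, addX, e]; simp only [curve10]; ring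
  rw [Point.add_of_X_ne hx, Point.some.injEq]
  refine ⟨hX, ?_⟩
  rw [addY, negAddY, hX, negY, slope_of_X_ne hx, f]; simp only [curve10]; ring

open WeierstrassCurve.Affine in
lemma add_tangent {x₁ y₁ x₃ y₃ : ℚ} {h₁ : curve10.Nonsingular x₁ y₁}
    {h₃ : curve10.Nonsingular x₃ y₃} (hy : y₁ ≠ -y₁)
    (e : x₃ = ((3 * x₁ ^ 2 + 110 / 9 * x₁ - 128 / 9) / (2 * y₁)) ^ 2 - 55 / 9 - x₁ - x₁)
    (f : y₃ = -((3 * x₁ ^ 2 + 110 / 9 * x₁ - 128 / 9) / (2 * y₁) * (x₃ - x₁) + y₁)) :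
    Point.some x₁ y₁ h₁ + Point.some x₁ y₁ h₁ = Point.some x₃ y₃ h₃ := by
  have hy' : y₁ ≠ curve10.negY x₁ y₁ := by
    rw [negY]; simpa [curve10] using hy
  have hs : curve10.slope x₁ x₁ y₁ y₁ = (3 * x₁ ^ 2 + 110 / 9 * x₁ - 128 / 9) / (2 * y₁) := by
    rw [slope_of_Y_ne rfl hy', negY]
    congr 1 <;> simp only [curve10] <;> ring
  have hX : curve10.addX x₁ x₁ (curve10.slope x₁ x₁ y₁ y₁) = x₃ := by
    rw [hs, addX, e]; simp only [curve10]; ring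
  rw [Point.add_self_of_Y_ne hy', Point.some.injEq]
  refine ⟨hX, ?_⟩
  rw [addY, negAddY, hX, negY, hs, f]; simp only [curve10]; ring

/-- The point of order two outside the cyclic subgroup generated by `ptS`. -/
def ptT : curve10.Point := .some (-8) 0 ns_8

/-- A point of order four. -/
def ptS : curve10.Point := .some 2 (10/3) ns_2

open WeierstrassCurve.Affine in
lemma T2 : ptT + ptT = 0 := Point.add_self_of_Y_eq (by norm_num [negY, curve10])

lemma S2 : ptS + ptS = .some 1 0 ns_1 := add_tangent (by norm_num) (by norm_num) (by norm_num)

lemma S3 : (.some 1 0 ns_1 : curve10.Point) + ptS = .some 2 (-10/3) ns_2' :=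
  add_chord (by norm_num) (by norm_num) (by norm_num)

open WeierstrassCurve.Affine in
lemma S4 : (.some 1 0 ns_1 : curve10.Point) + .some 1 0 ns_1 = 0 :=
  Point.add_self_of_Y_eq (by norm_num [negY, curve10])

lemma TS1 : ptT + ptS = .some 0 (-8/3) ns_0' :=
  add_chord (by norm_num) (by norm_num) (by norm_num)

lemma TS2 : ptT + .some 1 0 ns_1 = .some (8/9) 0 ns_89 :=
  add_chord (by norm_num) (by norm_num) (by norm_num)

lemma TS3 : ptT + .some 2 (-10/3) ns_2' = .some 0 (8/3) ns_0 :=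
  add_chord (by norm_num) (by norm_num) (by norm_num)

lemma smul2 : (2:ℤ) • ptS = .some 1 0 ns_1 := by rw [two_zsmul, S2]

lemma smul3 : (3:ℤ) • ptS = .some 2 (-10/3) ns_2' := by
  rw [show (3:ℤ) = 2 + 1 by norm_num, add_zsmul, smul2, one_zsmul, S3]

lemma smul4 : (4:ℤ) • ptS = 0 := by
  rw [show (4:ℤ) = 2 + 2 by norm_num, add_zsmul, smul2, S4]

/-- The homomorphism `(i, j) ↦ iT + jS`. -/
noncomputable def homF : ZMod 2 × ZMod 4 →+ curve10.Point :=
  AddMonoidHom.coprod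
    (ZMod.lift 2 ⟨zmultiplesHom _ ptT, by
      rw [zmultiplesHom_apply]; exact (two_zsmul ptT).trans T2⟩)
    (ZMod.lift 4 ⟨zmultiplesHom _ ptS, by
      rw [zmultiplesHom_apply]; exact smul4⟩)

lemma homF_apply (i j : ℤ) : homF ((i : ZMod 2), (j : ZMod 4)) = i • ptT + j • ptS := by
  simp only [homF, AddMonoidHom.coprod_apply, ZMod.lift_coe, zmultiplesHom_apply]

lemma v00 : homF (0, 0) = 0 := map_zero homF
lemma v01 : homF (0, 1) = .some 2 (10/3) ns_2 := by
  have := homF_apply 0 1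
  rw [zero_zsmul, one_zsmul, zero_add] at this; exact this
lemma v02 : homF (0, 2) = .some 1 0 ns_1 := by
  have := homF_apply 0 2
  rw [zero_zsmul, smul2, zero_add] at this; exact this
lemma v03 : homF (0, 3) = .some 2 (-10/3) ns_2' := by
  have := homF_apply 0 3
  rw [zero_zsmul, smul3, zero_add] at this; exact this
lemma v10 : homF (1, 0) = .some (-8) 0 ns_8 := by
  have := homF_apply 1 0
  rw [zero_zsmul, one_zsmul, add_zero] at this
  simpa [ptT] using this
lemma v11 : homF (1, 1) = .some 0 (-8/3) ns_0' := by
  have := homF_apply 1 1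
  rw [one_zsmul, one_zsmul, TS1] at this
  simpa using this
lemma v12 : homF (1, 2) = .some (8/9) 0 ns_89 := by
  have := homF_apply 1 2
  rw [one_zsmul, smul2, TS2] at this
  simpa using this
lemma v13 : homF (1, 3) = .some 0 (8/3) ns_0 := by
  have := homF_apply 1 3
  rw [one_zsmul, smul3, TS3] at this
  simpa using this

lemma homF_inj : Function.Injective homF := by
  rw [injective_iff_map_eq_zero]
  have key : ∀ i : ZMod 2, ∀ j : ZMod 4, homF (i, j) = 0 → (i, j) = 0 := by
    intro i j h
    fin_cases i <;> fin_cases j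
    · rfl
    · exact absurd (v01.symm.trans h) (WeierstrassCurve.Affine.Point.some_ne_zero _)
    · exact absurd (v02.symm.trans h) (WeierstrassCurve.Affine.Point.some_ne_zero _)
    · exact absurd (v03.symm.trans h) (WeierstrassCurve.Affine.Point.some_ne_zero _)
    · exact absurd (v10.symm.trans h) (WeierstrassCurve.Affine.Point.some_ne_zero _)
    · exact absurd (v11.symm.trans h) (WeierstrassCurve.Affine.Point.some_ne_zero _)
    · exact absurd (v12.symm.trans h) (WeierstrassCurve.Affine.Point.some_ne_zero _)
    · exact absurd (v13.symm.trans h) (WeierstrassCurve.Affine.Point.some_ne_zero _)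
  rintro ⟨i, j⟩ h
  exact key i j h

lemma coords {x y : ℚ} (h : curve10.Nonsingular x y) :
    (x = 1 ∧ y = 0) ∨ (x = -8 ∧ y = 0) ∨ (x = 8/9 ∧ y = 0) ∨ (x = 2 ∧ y = 10/3) ∨
    (x = 2 ∧ y = -10/3) ∨ (x = 0 ∧ y = 8/3) ∨ (x = 0 ∧ y = -8/3) := by
  have e := h.1
  rw [WeierstrassCurve.Affine.equation_iff] at e
  simp only [curve10] at e
  have e' : y ^ 2 = (x - 1) * (x + 8) * (x - 8/9) := by linear_combination e
  rcases curve_points (u := 9 * x - 9) (v := 27 * y) (by linear_combination 729 * e') with h | h | h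
  · have hy : y = 0 := by linarith
    rw [hy] at e'
    have e0 : (x - 1) * (x + 8) * (x - 8/9) = 0 := by rw [← e']; norm_num
    rcases mul_eq_zero.1 e0 with e1 | e1
    · rcases mul_eq_zero.1 e1 with e2 | e2
      · exact Or.inl ⟨by linarith, hy⟩
      · exact Or.inr (Or.inl ⟨by linarith, hy⟩)
    · exact Or.inr (Or.inr (Or.inl ⟨by linarith, hy⟩))
  · obtain rfl : x = 2 := by linarith
    have e0 : (y - 10/3) * (y + 10/3) = 0 := by linear_combination e'
    rcases mul_eq_zero.1 e0 with e1 | e1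
    · exact Or.inr (Or.inr (Or.inr (Or.inl ⟨rfl, by linarith⟩)))
    · exact Or.inr (Or.inr (Or.inr (Or.inr (Or.inl ⟨rfl, by linarith⟩))))
  · obtain rfl : x = 0 := by linarith
    have e0 : (y - 8/3) * (y + 8/3) = 0 := by linear_combination e'
    rcases mul_eq_zero.1 e0 with e1 | e1
    · exact Or.inr (Or.inr (Or.inr (Or.inr (Or.inr (Or.inl ⟨rfl, by linarith⟩)))))
    · exact Or.inr (Or.inr (Or.inr (Or.inr (Or.inr (Or.inr ⟨rfl, by linarith⟩)))))

lemma homF_surj : Function.Surjective homF := by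
  rintro (_ | ⟨x, y, h⟩)
  · exact ⟨_, v00⟩
  · rcases coords h with ⟨rfl, rfl⟩ | ⟨rfl, rfl⟩ | ⟨rfl, rfl⟩ | ⟨rfl, rfl⟩ | ⟨rfl, rfl⟩ | ⟨rfl, rfl⟩ |
      ⟨rfl, rfl⟩
    · exact ⟨_, v02⟩
    · exact ⟨_, v10⟩
    · exact ⟨_, v12⟩
    · exact ⟨_, v01⟩
    · exact ⟨_, v03⟩
    · exact ⟨_, v13⟩
    · exact ⟨_, v11⟩

/-- The elliptic curve induced by the triple `{3, −1/3, 8/3}` has torsion subgroup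
`ℤ/2ℤ × ℤ/4ℤ` and rank 0; equivalently, its full Mordell–Weil group over `ℚ`
is isomorphic to `ℤ/2ℤ × ℤ/4ℤ`. -/
theorem curve10_group :
    Nonempty (curve10.Point ≃+ (ZMod 2 × ZMod 4)) :=
  ⟨(AddEquiv.ofBijective homF ⟨homF_inj, homF_surj⟩).symm⟩
end

section
/- The set {4/3, −3/4, 7/12} is a rational Diophantine triple, and the elliptic curve y² = (4x/3+1)(−3x/4+1)(7x/12+1) has torsion subgroup over ℚ isomorphic to ℤ/2ℤ × ℤ/8ℤ. -/
/-- The Weierstrass model `y² = (x+ab)(x+ac)(x+bc)` of the elliptic curve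
`y² = (4x/3+1)(−3x/4+1)(7x/12+1)` induced by the rational Diophantine triple
`{4/3, −3/4, 7/12}` (via `(x, y) ↦ (abc·x, abc·y)`). -/
def curve15 : WeierstrassCurve.Affine ℚ :=
  { a₁ := 0, a₂ := (4/3) * (-3/4) + (4/3) * (7/12) + (-3/4) * (7/12), a₃ := 0,
    a₄ := (4/3) * (-3/4) * (7/12) * ((4/3) + (-3/4) + (7/12)),
    a₆ := ((4/3) * (-3/4) * (7/12)) ^ 2 }


/-- `n` is a square modulo `m` (always true when `n` is a square and `0 < m`). -/
def sqMod (n m : ℕ) : Bool := (List.range m).any fun k => k * k % m == n % m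

lemma sqMod_sq (t m : ℕ) (hm : 0 < m) : sqMod (t ^ 2) m = true := by
  unfold sqMod
  rw [List.any_eq_true]
  exact ⟨t % m, List.mem_range.2 (Nat.mod_lt _ hm), by simp [sq, ← Nat.mul_mod]⟩

def sqChk (e d : ℕ) : Bool :=
  let r := (81 * e ^ 2 / d - d) / 2
  let n := r ^ 2 + 256 * e ^ 2
  !(d * (2 * r + d) == 81 * e ^ 2) || r == 0 || r == 12 * e || !([11, 13, 17, 19, 23, 29, 31, 37].all fun m => sqMod n m)

lemma sqChk_all : ∀ e < 29, ∀ d < 261, 0 < e → 0 < d → sqChk e d = true := by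
  decide +kernel

lemma small_search (r s t e : ℕ) (hr : 0 < r) (he : 0 < e) (he' : e < 29)
    (hs : r ^ 2 + 81 * e ^ 2 = s ^ 2) (ht : r ^ 2 + 256 * e ^ 2 = t ^ 2) : r = 12 * e := by
  have hlt : r < s := by nlinarith
  obtain ⟨d, rfl⟩ := Nat.exists_eq_add_of_lt hlt
  have hd : (d + 1) * (2 * r + (d + 1)) = 81 * e ^ 2 := by nlinarith
  have hd2 : d + 1 < 261 := by nlinarith
  have h := sqChk_all e he' (d + 1) hd2 he (Nat.succ_pos d)
  have hq : (81 * e ^ 2 / (d + 1) - (d + 1)) / 2 = r := by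
    rw [← hd, Nat.mul_div_cancel_left _ (Nat.succ_pos d)]
    omega
  have hsq : ([11, 13, 17, 19, 23, 29, 31, 37].all fun m => sqMod (r ^ 2 + 256 * e ^ 2) m) = true := by
    rw [ht]
    simp [sqMod_sq]
  unfold sqChk at h
  rw [hq] at h
  simp only [hd, hsq] at h
  simpa [hr.ne'] using h

lemma e_bound (r s t e : ℕ) (hr : 0 < r)
    (hs : r ^ 2 + 81 * e ^ 2 = s ^ 2) (ht : r ^ 2 + 256 * e ^ 2 = t ^ 2)
    (hb : 2 * r * s * t ≤ 7257600) : e < 29 := by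
  by_contra! h
  have h1 : 9 * e < s := by nlinarith
  have h2 : 16 * e < t := by nlinarith
  have h3 : 31 ≤ r := by
    by_contra! h3
    have : (16 * e + 1) ^ 2 ≤ t ^ 2 := Nat.pow_le_pow_left h2 2
    nlinarith
  have : 31 * (9 * 29) * (16 * 29) ≤ r * s * t := by
    gcongr <;> omega
  nlinarith

lemma dvd_step (r s t e N D n d : ℤ) (hco : IsCoprime r e)
    (hs : r ^ 2 + 81 * e ^ 2 = s ^ 2) (ht : r ^ 2 + 256 * e ^ 2 = t ^ 2)
    (hN : N = r ^ 4 - 20736 * e ^ 4) (hD : D = 2 * r * s * t * e)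
    (h : N * d = n * D) : D ∣ 7257600 * d := by
  have hD2 : D ^ 2 = 4 * r ^ 2 * (r ^ 2 + 81 * e ^ 2) * (r ^ 2 + 256 * e ^ 2) * e ^ 2 := by
    rw [hD, hs, ht]; ring
  have hN2 : D ^ 2 ∣ N ^ 2 * d ^ 2 := ⟨n ^ 2, by rw [← mul_pow, h]; ring⟩
  have hDD : D ^ 2 ∣ D ^ 2 * d ^ 2 := Dvd.intro _ rfl
  have k1 : D ^ 2 ∣ (7257600 * d) ^ 2 * e ^ 14 := by
    have : (7257600 * d) ^ 2 * e ^ 14 =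
        (13976064 * e ^ 6 - 103680 * r ^ 2 * e ^ 4 - 337 * r ^ 4 * e ^ 2 + 3 * r ^ 6)
          * (D ^ 2 * d ^ 2)
        + (122500 * e ^ 6 - 2696 * r ^ 2 * e ^ 4 - 12 * r ^ 4 * e ^ 2) * (N ^ 2 * d ^ 2) := by
      rw [hD2, hN]; ring
    rw [this]
    exact dvd_add (hDD.mul_left _) (hN2.mul_left _)
  have k2 : D ^ 2 ∣ (7257600 * d) ^ 2 * r ^ 14 := by
    have : (7257600 * d) ^ 2 * r ^ 14 =
        (11501279977342425366528 * e ^ 6 - 62305995247627272192 * r ^ 2 * e ^ 4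
          - 924421294475182080 * r ^ 4 * e ^ 2 + 6009451702124544 * r ^ 6) * (D ^ 2 * d ^ 2)
        + (-2218611106740436992 * r ^ 2 * e ^ 4 - 24037806808498176 * r ^ 4 * e ^ 2
          + 52672757760000 * r ^ 6) * (N ^ 2 * d ^ 2) := by
      rw [hD2, hN]; ring
    rw [this]
    exact dvd_add (hDD.mul_left _) (hN2.mul_left _)
  obtain ⟨u, v, huv⟩ := (hco.pow (m := 14) (n := 14))
  have k3 : D ^ 2 ∣ (7257600 * d) ^ 2 := by
    have : (7257600 * d) ^ 2 = u * ((7257600 * d) ^ 2 * r ^ 14) + v * ((7257600 * d) ^ 2 * e ^ 14) := by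
      linear_combination (-(7257600 * d) ^ 2) * huv
    rw [this]
    exact dvd_add (k2.mul_left _) (k1.mul_left _)
  exact (Int.pow_dvd_pow_iff two_ne_zero).1 k3

lemma arith (r s t e : ℕ) (hr : 0 < r) (he : 0 < e) (hco : Nat.Coprime r e)
    (hs : r ^ 2 + 81 * e ^ 2 = s ^ 2) (ht : r ^ 2 + 256 * e ^ 2 = t ^ 2) (q : ℚ)
    (hq : q * (2 * r * s * t * e) = r ^ 4 - 20736 * e ^ 4) (hd : q.den ≤ e) : r = 12 * e := by
  have hs0 : 0 < s := by nlinarith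
  have ht0 : 0 < t := by nlinarith
  have key : ((2 * r * s * t * e : ℕ) : ℤ) ∣ 7257600 * (q.den : ℤ) := by
    refine dvd_step r s t e ((r:ℤ) ^ 4 - 20736 * e ^ 4) _ q.num q.den ?_ ?_ ?_ rfl ?_ ?_
    · exact Nat.isCoprime_iff_coprime.2 hco
    · exact_mod_cast hs
    · exact_mod_cast ht
    · push_cast; ring
    · have h1 : (q.num : ℚ) = q * q.den := (Rat.mul_den_eq_num q).symm
      have : (((r:ℤ) ^ 4 - 20736 * e ^ 4 : ℤ) : ℚ) * ((q.den : ℤ) : ℚ)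
        = (q.num : ℚ) * (((2 * r * s * t * e : ℕ) : ℤ) : ℚ) := by
        rw [h1]; push_cast; rw [← hq]; ring
      exact_mod_cast this
  have key2 : 2 * r * s * t * e ∣ 7257600 * q.den := by exact_mod_cast key
  have hle := Nat.le_of_dvd (Nat.mul_pos (by norm_num) q.den_pos) key2
  have hle2 : 2 * r * s * t * e ≤ 7257600 * e := hle.trans (by gcongr)
  exact small_search r s t e hr he
    (e_bound r s t e hr hs ht (Nat.le_of_mul_le_mul_right hle2 he)) hs ht

/-- If `X, X+81, X+256` are rational squares, `X ≠ 0, 144`, then doubling increases the denominator. -/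
lemma den_lt (X a b c : ℚ) (hX : X ≠ 0) (h144 : X ≠ 144) (ha : X = a ^ 2) (hb : X + 81 = b ^ 2)
    (hc : X + 256 = c ^ 2) (X' : ℚ)
    (hX' : X' * (4 * X * (X + 81) * (X + 256)) = (X ^ 2 - 20736) ^ 2) : X.den < X'.den := by
  have ha0 : a ≠ 0 := by rintro rfl; simp at ha; exact hX ha
  set r := a.num.natAbs with hrdef
  set e := a.den with hedef
  have he : 0 < e := a.den_pos
  have heQ : (e : ℚ) ≠ 0 := by exact_mod_cast he.ne'
  have hr : 0 < r := Int.natAbs_pos.2 (Rat.num_ne_zero.2 ha0)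
  have hre : a ^ 2 * (e:ℚ) ^ 2 = (r : ℚ) ^ 2 := by
    have h1 : a * a.den = a.num := Rat.mul_den_eq_num a
    have h2 : ((r:ℤ):ℚ) ^ 2 = (a.num : ℚ) ^ 2 := by
      have : (r:ℤ)^2 = a.num ^ 2 := Int.natAbs_sq _
      exact_mod_cast this
    rw [← mul_pow, h1, ← h2]; simp
  have sqr : ∀ (k : ℕ) (b : ℚ), X + k = b ^ 2 → ∃ s : ℕ, r ^ 2 + k * e ^ 2 = s ^ 2 := by
    intro k b hb
    have h1 : IsSquare (((r ^ 2 + k * e ^ 2 : ℕ)) : ℚ) := by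
      refine ⟨b * e, ?_⟩
      push_cast
      rw [← hre, ← ha]
      linear_combination (e:ℚ)^2 * hb
    rw [Rat.isSquare_natCast_iff] at h1
    obtain ⟨s, hs⟩ := h1
    exact ⟨s, by rw [hs, sq]⟩
  obtain ⟨s, hs⟩ := sqr 81 b (by exact_mod_cast hb)
  obtain ⟨t, ht⟩ := sqr 256 c (by exact_mod_cast hc)
  have hsQ : (r:ℚ) ^ 2 + 81 * e ^ 2 = s ^ 2 := by exact_mod_cast hs
  have htQ : (r:ℚ) ^ 2 + 256 * e ^ 2 = t ^ 2 := by exact_mod_cast ht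
  have hs0 : 0 < s := by nlinarith
  have ht0 : 0 < t := by nlinarith
  have hD : (2 * r * s * t * e : ℚ) ≠ 0 := by positivity
  set q : ℚ := (r ^ 4 - 20736 * e ^ 4) / (2 * r * s * t * e) with hqdef
  have hq : q * (2 * r * s * t * e) = r ^ 4 - 20736 * e ^ 4 := div_mul_cancel₀ _ hD
  have hXe : X * e ^ 2 = r ^ 2 := by rw [ha, hre]
  have hXq : X' = q ^ 2 := by
    have h1 : X' * (2 * r * s * t * e) ^ 2 = q ^ 2 * (2 * r * s * t * e) ^ 2 := by
      rw [← mul_pow, hq]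
      have e1 : (2 * r * s * t * e : ℚ) ^ 2 = (4 * X * (X + 81) * (X + 256)) * e ^ 8 := by
        have : (2 * r * s * t * e : ℚ) ^ 2 = 4 * r ^ 2 * s ^ 2 * t ^ 2 * e ^ 2 := by ring
        rw [this, ← hsQ, ← htQ, ← hXe]; ring
      have e2 : (r ^ 4 - 20736 * e ^ 4 : ℚ) = (X ^ 2 - 20736) * e ^ 4 := by
        have : (r ^ 4 : ℚ) = (r ^ 2) ^ 2 := by ring
        rw [this, ← hXe]; ring
      rw [e1, e2, ← mul_assoc, hX']; ring
    exact mul_right_cancel₀ (pow_ne_zero 2 hD) h1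
  have hdX : X.den = e ^ 2 := by rw [ha, Rat.den_pow]
  have hdX' : X'.den = q.den ^ 2 := by rw [hXq, Rat.den_pow]
  rw [hdX, hdX']
  refine Nat.pow_lt_pow_left ?_ two_ne_zero
  by_contra! hle
  have := arith r s t e hr he a.reduced hs ht q hq hle
  apply h144
  have h2 : X * e ^ 2 = 144 * e ^ 2 := by rw [hXe, this]; push_cast; ring
  exact mul_right_cancel₀ (pow_ne_zero 2 heQ) h2

open WeierstrassCurve.Affine in
lemma c15_eqn {x y : ℚ} (h : curve15.Nonsingular x y) :
    y ^ 2 = (x - 1) * (x + 7 / 9) * (x - 7 / 16) := by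
  have := (equation_iff x y).1 h.1
  simp only [curve15] at this
  linear_combination this

open WeierstrassCurve.Affine in
lemma c15_ns {x y : ℚ} (h : y ^ 2 = (x - 1) * (x + 7 / 9) * (x - 7 / 16))
    (h' : 2 * y ≠ 0 ∨ 3 * x ^ 2 - 95 / 72 * x - 49 / 72 ≠ 0) : curve15.Nonsingular x y := by
  rw [nonsingular_iff', equation_iff]
  simp only [curve15]
  refine ⟨by linear_combination h, ?_⟩
  rcases h' with h' | h'
  · right; simpa using h'
  · left
    intro h0
    apply h'
    linear_combination -h0

open WeierstrassCurve.Affine in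
lemma c15_negY (x y : ℚ) : curve15.negY x y = -y := by
  simp [negY, curve15]

open WeierstrassCurve.Affine in
/-- Doubling formula. -/
lemma c15_dbl {x y : ℚ} (h : curve15.Nonsingular x y) (hy : y ≠ 0) :
    ∃ x' y', ∃ h' : curve15.Nonsingular x' y',
      Point.some x y h + Point.some x y h = Point.some x' y' h' ∧
      144 * (x' - 1) = (((144 * (x - 1)) ^ 2 - 20736) / (2 * (1728 * y))) ^ 2 ∧
      y' = -((3 * x ^ 2 - 95 / 72 * x - 49 / 72) / (2 * y) * (x' - x) + y) := by
  have hne : y ≠ curve15.negY x y := by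
    rw [c15_negY]; intro h0; apply hy; linarith
  have he := c15_eqn h
  refine ⟨_, _, _, Point.add_self_of_Y_ne hne, ?_, ?_⟩
  · rw [slope_of_Y_ne rfl hne, c15_negY]
    simp only [addX, curve15]
    field_simp
    have h4 : y ^ 4 = (y ^ 2) ^ 2 := by ring
    ring_nf
    try rw [h4]
    rw [he]
    ring
  · rw [addY, c15_negY, negAddY, slope_of_Y_ne rfl hne, c15_negY]
    simp only [addX, curve15]
    ring

open WeierstrassCurve.Affine in
lemma c15_dbl_sq (P : curve15.Point) {x y : ℚ} (h : curve15.Nonsingular x y)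
    (hP : P + P = Point.some x y h) :
    (∃ a : ℚ, 144 * (x - 1) = a ^ 2) ∧ (∃ a : ℚ, 144 * (x - 1) + 81 = a ^ 2) ∧
      (∃ a : ℚ, 144 * (x - 1) + 256 = a ^ 2) := by
  rcases P with _ | ⟨u, v, huv⟩
  · exact absurd hP.symm (Point.some_ne_zero h)
  · by_cases hv : v = 0
    · exfalso
      rw [Point.add_self_of_Y_eq (by rw [c15_negY, hv, neg_zero])] at hP
      exact Point.some_ne_zero h hP.symm
    · obtain ⟨x', y', h', e1, e2, -⟩ := c15_dbl huv hv
      rw [e1] at hP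
      obtain ⟨rfl, rfl⟩ := Point.some.inj hP
      have he := c15_eqn huv
      rw [e2]
      refine ⟨⟨_, rfl⟩,
        ⟨((144 * (u - 1)) ^ 2 + 162 * (144 * (u - 1)) + 20736) / (2 * (1728 * v)), ?_⟩,
        ⟨((144 * (u - 1)) ^ 2 + 512 * (144 * (u - 1)) + 20736) / (2 * (1728 * v)), ?_⟩⟩
      · field_simp
        ring_nf
        rw [he]; ring
      · field_simp
        ring_nf
        rw [he]; ring

open WeierstrassCurve.Affine in
/-- Points of order dividing two have `y = 0`. -/
lemma c15_two_tors {x y : ℚ} (h : curve15.Nonsingular x y)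
    (h2 : Point.some x y h + Point.some x y h = 0) : y = 0 := by
  by_contra hy
  obtain ⟨x', y', h', e1, -, -⟩ := c15_dbl h hy
  rw [e1] at h2
  exact Point.some_ne_zero _ h2

/-- measure: denominator of the shifted x-coordinate -/
def pden : curve15.Point → ℕ
  | .zero => 0
  | .some x _ _ => (144 * (x - 1)).den

open WeierstrassCurve.Affine in
lemma pden_lt (P Q : curve15.Point) (hQ : P = Q + Q) (h4 : (P + P) + (P + P) ≠ 0) :
    pden P < pden (P + P) := by
  rcases P with _ | ⟨x, y, h⟩
  · exact absurd (show (0 : curve15.Point) + 0 + (0 + 0) = 0 by simp) h4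
  · have hy : y ≠ 0 := by
      rintro rfl
      apply h4
      rw [Point.add_self_of_Y_eq (by rw [c15_negY, neg_zero]), add_zero]
    obtain ⟨⟨a, ha⟩, ⟨b, hb⟩, ⟨c, hc⟩⟩ := c15_dbl_sq Q h hQ.symm
    obtain ⟨x', y', h', e1, e2, -⟩ := c15_dbl h hy
    have he := c15_eqn h
    rw [e1] at h4 ⊢
    refine den_lt _ a b c ?_ ?_ ha hb hc _ ?_
    · intro h0
      have : x = 1 := by linarith
      subst this
      apply hy
      simpa using he
    · intro h0
      have : x = 2 := by linarith
      subst this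
      have hx' : x' = 1 := by
        norm_num at e2
        linarith
      subst hx'
      apply h4
      have := c15_eqn h'
      have hy' : y' = 0 := by simpa using this
      subst hy'
      exact Point.add_self_of_Y_eq (by rw [c15_negY, neg_zero])
    · rw [e2]
      have hv : (2 * (1728 * y)) ^ 2 =
          4 * (144 * (x - 1)) * (144 * (x - 1) + 81) * (144 * (x - 1) + 256) := by
        linear_combination 4 * 1728 ^ 2 * he
      rw [← hv, ← mul_pow, div_mul_cancel₀]
      simpa using hy

/-- No nontrivial odd torsion. -/
lemma odd_tors (P : curve15.Point) (n : ℕ) (hn : Odd n) (hP : n • P = 0) : P = 0 := by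
  by_contra hP0
  obtain ⟨k, hk⟩ := hn
  -- every nonzero point killed by n
  have step : ∀ Q : curve15.Point, n • Q = 0 → Q ≠ 0 → (n • (Q + Q) = 0 ∧ Q + Q ≠ 0) := by
    intro Q hQ hQ0
    refine ⟨by rw [nsmul_add, hQ, add_zero], fun h => hQ0 ?_⟩
    rw [← two_nsmul] at h
    have : n • Q = Q := by rw [hk, add_nsmul, mul_nsmul, h, nsmul_zero, zero_add, one_nsmul]
    rw [← this, hQ]
  have half : ∀ Q : curve15.Point, n • Q = 0 → Q = (k + 1) • Q + (k + 1) • Q := by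
    intro Q hQ
    rw [← add_nsmul, show k + 1 + (k + 1) = n + 1 by omega, add_nsmul, hQ, zero_add, one_nsmul]
  have all : ∀ m : ℕ, n • (2 ^ m • P) = 0 ∧ 2 ^ m • P ≠ 0 ∧ m ≤ pden (2 ^ m • P) := by
    intro m
    induction m with
    | zero => simpa using ⟨hP, hP0⟩
    | succ m ih =>
      obtain ⟨i1, i2, i3⟩ := ih
      have hd : 2 ^ (m + 1) • P = 2 ^ m • P + 2 ^ m • P := by
        rw [← add_nsmul]; congr 1; ring
      obtain ⟨s1, s2⟩ := step _ i1 i2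
      obtain ⟨s3, s4⟩ := step _ s1 s2
      rw [hd]
      exact ⟨s1, s2, by have := pden_lt _ _ (half _ i1) s4; omega⟩
  have hper : ∀ j : ℕ, 2 ^ (n.totient * j) • P = P := by
    intro j
    have hc : Nat.Coprime (2 ^ j) n := by
      apply Nat.Coprime.pow_left
      rw [hk]; simp
    have := Nat.ModEq.pow_totient hc
    rw [← pow_mul, mul_comm] at this
    have h1 : 2 ^ (n.totient * j) ≡ 1 [MOD n] := this
    obtain ⟨q, hq⟩ := (Nat.modEq_iff_dvd' (Nat.one_le_two_pow)).1 h1.symm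
    have : 2 ^ (n.totient * j) = n * q + 1 := by
      have := Nat.one_le_two_pow (n := n.totient * j); omega
    rw [this, add_nsmul, mul_comm, mul_nsmul', one_nsmul]
    simp [hP]
  have hφ : 0 < n.totient := Nat.totient_pos.2 (by omega)
  have := (all (n.totient * (pden P + 1))).2.2
  rw [hper] at this
  nlinarith

lemma nsA : curve15.Nonsingular (7 / 6) (35 / 72) := c15_ns (by norm_num) (by norm_num)
lemma nsB : curve15.Nonsingular (7 / 16) 0 := c15_ns (by norm_num) (by norm_num)
lemma nsC : curve15.Nonsingular 1 0 := c15_ns (by norm_num) (by norm_num)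

def ptA : curve15.Point := .some _ _ nsA
def ptB : curve15.Point := .some _ _ nsB
def ptC : curve15.Point := .some _ _ nsC

open WeierstrassCurve.Affine in
lemma four_A : 4 • ptA = ptC := by
  obtain ⟨x', y', h', e1, e2, e3⟩ := c15_dbl nsA (by norm_num)
  have hx : x' = 2 := by norm_num at e2; linarith
  subst hx
  have hy : y' ≠ 0 := by rw [e3]; norm_num
  obtain ⟨x2, y2, h2, f1, f2, -⟩ := c15_dbl h' hy
  have hx2 : x2 = 1 := by norm_num at f2; linarith
  subst hx2
  have hy2 : y2 = 0 := by simpa using c15_eqn h2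
  subst hy2
  rw [show (4 : ℕ) = 2 * 2 from rfl, mul_nsmul, two_nsmul ptA, ptA, e1, two_nsmul, f1]
  rfl

open WeierstrassCurve.Affine in
lemma BB : ptB + ptB = 0 := Point.add_self_of_Y_eq (by rw [c15_negY, neg_zero])
open WeierstrassCurve.Affine in
lemma CC : ptC + ptC = 0 := Point.add_self_of_Y_eq (by rw [c15_negY, neg_zero])

open WeierstrassCurve.Affine in
lemma sum_X {x₁ y₁ x₂ y₂ : ℚ} (h₁ : curve15.Nonsingular x₁ y₁) (h₂ : curve15.Nonsingular x₂ y₂)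
    (hx : x₁ ≠ x₂) : ∃ x y, ∃ h : curve15.Nonsingular x y,
      Point.some _ _ h₁ + Point.some _ _ h₂ = Point.some x y h ∧
      x = ((y₁ - y₂) / (x₁ - x₂)) ^ 2 + 95 / 144 - x₁ - x₂ := by
  refine ⟨_, _, _, Point.add_of_X_ne hx, ?_⟩
  rw [slope_of_X_ne hx]
  simp only [addX, curve15]
  ring

open WeierstrassCurve.Affine in
lemma not_half_A (Q : curve15.Point) : Q + Q ≠ ptA := by
  intro h
  obtain ⟨⟨a, ha⟩, -, -⟩ := c15_dbl_sq Q nsA h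
  have : IsSquare ((24 : ℕ) : ℚ) := ⟨a, by rw [← sq, ← ha]; norm_num⟩
  rw [Rat.isSquare_natCast_iff] at this
  obtain ⟨r, hr⟩ := this
  have : r < 5 := by nlinarith
  interval_cases r <;> omega

open WeierstrassCurve.Affine in
lemma not_half_B (Q : curve15.Point) : Q + Q ≠ ptB := by
  intro h
  obtain ⟨⟨a, ha⟩, -, -⟩ := c15_dbl_sq Q nsB h
  nlinarith [sq_nonneg a]

open WeierstrassCurve.Affine in
lemma not_half_AB (Q : curve15.Point) : Q + Q ≠ ptA + ptB := by
  intro h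
  obtain ⟨x, y, hxy, e1, e2⟩ := sum_X nsA nsB (by norm_num)
  rw [ptA, ptB, e1] at h
  obtain ⟨⟨a, ha⟩, -, -⟩ := c15_dbl_sq Q hxy h
  norm_num at e2
  rw [e2] at ha
  nlinarith [sq_nonneg a]

lemma B_ne : ptB ≠ 0 := WeierstrassCurve.Affine.Point.some_ne_zero _
lemma C_ne : ptC ≠ 0 := WeierstrassCurve.Affine.Point.some_ne_zero _
lemma BC_ne : ptB + ptC ≠ 0 := by
  obtain ⟨x, y, hxy, e1, -⟩ := sum_X nsB nsC (by norm_num)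
  rw [ptB, ptC, e1]
  exact WeierstrassCurve.Affine.Point.some_ne_zero _

open WeierstrassCurve.Affine in
lemma two_tors (P : curve15.Point) (h : P + P = 0) : P = 0 ∨ P = ptB ∨ P = ptC ∨ P = ptB + ptC := by
  rcases P with _ | ⟨x, y, hxy⟩
  · left; rfl
  right
  have hy := c15_two_tors hxy h
  subst hy
  have he := c15_eqn hxy
  have : x = 1 ∨ x = -7 / 9 ∨ x = 7 / 16 := by
    have : (x - 1) * (x + 7 / 9) * (x - 7 / 16) = 0 := by rw [← he]; norm_num
    rcases mul_eq_zero.1 this with h | h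
    · rcases mul_eq_zero.1 h with h | h
      · left; linarith
      · right; left; linarith
    · right; right; linarith
  rcases this with rfl | rfl | rfl
  · right; left; rfl
  · right; right
    obtain ⟨x, y, h', e1, e2⟩ := sum_X nsB nsC (by norm_num)
    norm_num at e2
    subst e2
    have hy : y = 0 := by have := c15_eqn h'; norm_num at this; exact this
    subst hy
    rw [ptB, ptC, e1]
    congr 1; norm_num
  · left; rfl

lemma hA8 : 8 • ptA = 0 := by
  rw [show (8 : ℕ) = 4 * 2 from rfl, mul_nsmul, four_A, two_nsmul, CC]

lemma hA8z : (8 : ℤ) • ptA = 0 := (natCast_zsmul ptA 8).trans hA8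

/-- membership in the group generated by A and B -/
def inH (P : curve15.Point) : Prop := ∃ i j : ℤ, P = i • ptB + j • ptA

lemma half_mem (Q : curve15.Point) (h : inH (Q + Q)) : inH Q := by
  obtain ⟨i, j, hij⟩ := h
  have hB2 : (2 : ℤ) • ptB = 0 := by rw [two_zsmul, BB]
  have hBi : i • ptB = (i % 2) • ptB := by
    conv_lhs => rw [← Int.emod_add_mul_ediv i 2, add_zsmul, mul_comm, mul_zsmul, hB2,
      zsmul_zero, add_zero]
  have hAj : j • ptA = (j % 2) • ptA + ((j / 2) • ptA + (j / 2) • ptA) := by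
    rw [← add_zsmul, ← add_zsmul]; congr 1; omega
  set R := Q - (j / 2) • ptA with hR
  have hRR : R + R = (i % 2) • ptB + (j % 2) • ptA := by
    have : R + R = Q + Q - ((j / 2) • ptA + (j / 2) • ptA) := by rw [hR]; abel
    rw [this, hij, hBi, hAj]; abel
  have hQ : Q = R + (j / 2) • ptA := by rw [hR]; abel
  have hC : ptC = (4 : ℤ) • ptA := by rw [← four_A]; norm_cast
  rcases Int.emod_two_eq_zero_or_one i with hi | hi <;>
    rcases Int.emod_two_eq_zero_or_one j with hj | hj <;> rw [hi, hj] at hRR <;>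
    simp only [zero_zsmul, one_zsmul, zero_add, add_zero] at hRR
  · rcases two_tors R hRR with h | h | h | h <;> rw [hQ, h]
    · exact ⟨0, j / 2, by simp⟩
    · exact ⟨1, j / 2, by simp⟩
    · exact ⟨0, 4 + j / 2, by rw [hC, add_zsmul]; simp⟩
    · exact ⟨1, 4 + j / 2, by rw [hC, add_zsmul, one_zsmul, add_assoc]⟩
  · exact absurd hRR (not_half_A R)
  · exact absurd hRR (not_half_B R)
  · exact absurd (hRR.trans (add_comm _ _)) (not_half_AB R)

lemma tors_mem (P : curve15.Point) (n : ℕ) (hn : 0 < n) (hP : n • P = 0) : inH P := by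
  obtain ⟨k, m, hm, rfl⟩ := Nat.exists_eq_two_pow_mul_odd hn.ne'
  rw [mul_nsmul] at hP
  have h0 := odd_tors _ m hm hP
  clear hP hn
  induction k generalizing P with
  | zero => exact ⟨0, 0, by simpa using h0⟩
  | succ k ih =>
    apply half_mem
    apply ih
    rw [← two_nsmul, ← mul_nsmul, ← h0, pow_succ, mul_comm]

noncomputable def phi : ZMod 2 × ZMod 8 →+ curve15.Point :=
  AddMonoidHom.coprod
    (ZMod.lift 2 ⟨zmultiplesHom _ ptB, (two_zsmul ptB).trans BB⟩)
    (ZMod.lift 8 ⟨zmultiplesHom _ ptA, hA8z⟩)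

lemma phi_apply (i j : ℤ) : phi ((i : ZMod 2), (j : ZMod 8)) = i • ptB + j • ptA := by
  simp [phi]

lemma phi_inj : Function.Injective phi := by
  rw [injective_iff_map_eq_zero]
  rintro ⟨a, b⟩ h
  have hB : phi (1, 0) = ptB := by simpa using phi_apply 1 0
  have hC : phi (0, 4) = ptC := by
    have := phi_apply 0 4
    rw [← four_A, ← natCast_zsmul ptA 4]
    rw [zero_zsmul, zero_add] at this
    exact this
  have hBC : phi (1, 4) = ptB + ptC := by rw [← hB, ← hC, ← map_add]; rfl
  by_contra hne
  have key : ∀ p : ZMod 2 × ZMod 8, p ≠ 0 → ∃ k : Fin 8, k.val • p = (1, 0) ∨ k.val • p = (0, 4) ∨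
    k.val • p = (1, 4) := by decide
  obtain ⟨k, hk⟩ := key _ hne
  have h0 : phi (k.val • (a, b)) = 0 := by rw [map_nsmul, h, nsmul_zero]
  rcases hk with hk | hk | hk <;> rw [hk] at h0
  · exact B_ne (hB ▸ h0)
  · exact C_ne (hC ▸ h0)
  · exact BC_ne (hBC ▸ h0)

lemma phi_range : phi.range = AddCommGroup.torsion curve15.Point := by
  ext P
  constructor
  · rintro ⟨p, rfl⟩
    have : IsOfFinAddOrder (phi p) := by
      rw [isOfFinAddOrder_iff_nsmul_eq_zero]
      refine ⟨8, by norm_num, ?_⟩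
      rw [← map_nsmul]
      have : ∀ p : ZMod 2 × ZMod 8, 8 • p = 0 := by decide
      rw [this, map_zero]
    exact this
  · intro h
    have h : IsOfFinAddOrder P := h
    rw [isOfFinAddOrder_iff_nsmul_eq_zero] at h
    obtain ⟨n, hn, h⟩ := h
    obtain ⟨i, j, rfl⟩ := tors_mem P n hn h
    exact ⟨_, phi_apply i j⟩

/-- The set {4/3, −3/4, 7/12} is a rational Diophantine triple, and the induced
elliptic curve has torsion subgroup over ℚ isomorphic to `ℤ/2ℤ × ℤ/8ℤ`. -/
theorem triple_and_torsion :
    ((∃ q : ℚ, (4/3 : ℚ) * (-3/4) + 1 = q ^ 2) ∧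
     (∃ q : ℚ, (4/3 : ℚ) * (7/12) + 1 = q ^ 2) ∧
     (∃ q : ℚ, (-3/4 : ℚ) * (7/12) + 1 = q ^ 2)) ∧
    Nonempty ((AddCommGroup.torsion curve15.Point) ≃+ (ZMod 2 × ZMod 8)) := by
  refine ⟨⟨⟨0, by norm_num⟩, ⟨4 / 3, by norm_num⟩, ⟨3 / 4, by norm_num⟩⟩, ⟨?_⟩⟩
  exact ((AddMonoidHom.ofInjective phi_inj).trans
    (AddEquiv.addSubgroupCongr phi_range)).symm
end
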